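/- arXiv:2003.04271 — 2 statements merged into one kernel-verified Lean document; each statement's English description precedes it below -/
import Mathlib

section
/- On every sample path (i.e., for every finite sequence of updates with arrival times t_1 < t_2 < … < t_N and sizes S_1, …, S_N > 0, such that all scheduling choices are unique or both policies use the same deterministic tie-breaking rule), the non-preemptive policies ADE_I and SJF_I are equivalent: at every service-start epoch they select the same update at the same time, so for every k, the k-th update selected for service and the time at which it is selected coincide under the two policies, and consequently the two policies produce identical delivery times and identical AoI trajectories. -/
/-!
Adding the common start time to both sizes does not change their order, so the ADE_I rule is
literally the SJF_I rule, and it remains to show that with distinct sizes an SJF_I schedule is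
unique (`Schedule.startsAt_iff`).

Compare two SJF_I schedules and look at the first instant `τ` at which they start different updates;
it exists because only finitely many start times occur. Before `τ` they started the same updates at
the same times, so at `τ` they have delivered the same updates and have the same informative waiting
ones. If one schedule starts `i` at `τ`, its server is free then, so the other server is also free of
earlier work at `τ`. As `i` is waiting there too, work conservation forces the other one to start
some `j` at `τ`. Both `i` and `j` are smallest among the same waiting updates, hence have equal
sizes, and `i = j` (`Schedule.StartsAt.transfer`).
-/

open Set

/-- A (non-preemptive, single-server) schedule for `n` updates: the set of updates that
are eventually served together with the service-start time of each update.  Arrival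
times are `t i` and sizes (required service times) are `S i`; a served update `i` is
delivered at time `start i + S i`. -/
structure Schedule (n : ℕ) where
  served : Set (Fin n)
  start : Fin n → ℝ

namespace Schedule

variable {n : ℕ}

/-- The delivery time of update `i`: its service-start time plus its size. -/
def finish (σ : Schedule n) (S : Fin n → ℝ) (i : Fin n) : ℝ := σ.start i + S i

/-- `U σ t S s` is the largest arrival time among updates delivered by time `s`
(and `0` if no update has been delivered yet). -/
noncomputable def U (σ : Schedule n) (t S : Fin n → ℝ) (s : ℝ) : ℝ :=
  sSup {x | ∃ i ∈ σ.served, σ.finish S i ≤ s ∧ x = t i}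

/-- The age of information at time `s` under the schedule `σ`. -/
noncomputable def aoi (σ : Schedule n) (t S : Fin n → ℝ) (s : ℝ) : ℝ :=
  s - σ.U t S s

/-- Basic feasibility: each served update starts service no earlier than its arrival and
the service intervals of distinct served updates do not overlap. -/
def Feasible (σ : Schedule n) (t S : Fin n → ℝ) : Prop :=
  (∀ i ∈ σ.served, t i ≤ σ.start i) ∧
  (∀ i ∈ σ.served, ∀ j ∈ σ.served, i ≠ j →
    σ.finish S i ≤ σ.start j ∨ σ.finish S j ≤ σ.start i)

/-- Update `j` is waiting and informative at time `s`: it has arrived, its arrival time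
exceeds the largest delivered arrival time `U σ t S s`, and it has not yet started
service. -/
def WaitingInformative (σ : Schedule n) (t S : Fin n → ℝ) (j : Fin n) (s : ℝ) : Prop :=
  t j ≤ s ∧ σ.U t S s < t j ∧ (j ∉ σ.served ∨ s < σ.start j)

/-- Work conservation with respect to informative updates: the server idles only when no
informative update is waiting. -/
def WorkConservingInformative (σ : Schedule n) (t S : Fin n → ℝ) : Prop :=
  ∀ s : ℝ, (∃ i : Fin n, σ.WaitingInformative t S i s) →
    ∃ j ∈ σ.served, σ.start j ≤ s ∧ s < σ.finish S j

/-- The non-preemptive informative Shortest-Job-First policy SJF_I: feasible, serves only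
updates that are informative when their service starts, work conserving with respect to
informative updates, and whenever the server begins serving an update, that update has
the smallest size among the informative waiting updates. -/
def IsSJF_I (σ : Schedule n) (t S : Fin n → ℝ) : Prop :=
  σ.Feasible t S ∧
  (∀ i ∈ σ.served, σ.U t S (σ.start i) < t i) ∧
  σ.WorkConservingInformative t S ∧
  (∀ i ∈ σ.served, ∀ j : Fin n, σ.WaitingInformative t S j (σ.start i) → S i ≤ S j)

/-- The non-preemptive informative AoI-Drop-Earliest policy ADE_I: feasible, serves only
updates that are informative when their service starts, work conserving with respect to
informative updates, and whenever the server begins serving an update at time `s`, that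
update is the informative waiting update whose delivery (at time `s + S j` if served
now) would cause the AoI to drop at the earliest future time. -/
def IsADE_I (σ : Schedule n) (t S : Fin n → ℝ) : Prop :=
  σ.Feasible t S ∧
  (∀ i ∈ σ.served, σ.U t S (σ.start i) < t i) ∧
  σ.WorkConservingInformative t S ∧
  (∀ i ∈ σ.served, ∀ j : Fin n, σ.WaitingInformative t S j (σ.start i) →
    σ.start i + S i ≤ σ.start i + S j)

end Schedule

namespace Schedule

variable {n : ℕ} {t S : Fin n → ℝ}

/-- Update `i` is served by `σ`, with service starting at time `τ`. The value of `σ.start` at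
updates that are never served is meaningless, hence the condition `i ∈ σ.served`. -/
def StartsAt (σ : Schedule n) (i : Fin n) (τ : ℝ) : Prop :=
  i ∈ σ.served ∧ σ.start i = τ

/-- The informativeness threshold at time `s` depends only on service starts before `s`, because
sizes are positive. -/
theorem U_congr (hS : ∀ i, 0 < S i) {a b : Schedule n} {s : ℝ}
    (h : ∀ τ < s, ∀ i, a.StartsAt i τ ↔ b.StartsAt i τ) : a.U t S s = b.U t S s := by
  have sub : ∀ {a b : Schedule n}, (∀ τ < s, ∀ i, a.StartsAt i τ ↔ b.StartsAt i τ) →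
      {x | ∃ i ∈ a.served, a.finish S i ≤ s ∧ x = t i} ⊆
        {x | ∃ i ∈ b.served, b.finish S i ≤ s ∧ x = t i} := by
    rintro a b h x ⟨i, hi, hf, rfl⟩
    have hlt : a.start i < s := by
      have := hS i
      unfold finish at hf
      linarith
    obtain ⟨hb, hst⟩ := (h _ hlt i).1 ⟨hi, rfl⟩
    exact ⟨i, hb, by rwa [finish, hst], rfl⟩
  unfold U
  rw [Subset.antisymm (sub h) (sub fun τ hτ i => (h τ hτ i).symm)]

/-- If two SJF_I schedules agree strictly before `τ`, an update started by the first one at `τ` is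
also started by the second one at `τ`. -/
theorem StartsAt.transfer (hS : ∀ i, 0 < S i) (hinj : Function.Injective S) {a b : Schedule n}
    (ha : a.IsSJF_I t S) (hb : b.IsSJF_I t S) {τ : ℝ}
    (h : ∀ τ' < τ, ∀ i, a.StartsAt i τ' ↔ b.StartsAt i τ') {i : Fin n}
    (hi : a.StartsAt i τ) : b.StartsAt i τ := by
  obtain ⟨⟨harr, hdisj⟩, hinf, -, hmin⟩ := ha
  obtain ⟨⟨harr', -⟩, hinf', hwc', hmin'⟩ := hb
  obtain ⟨hia, hiτ⟩ := hi
  have hU : a.U t S τ = b.U t S τ := U_congr hS h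
  by_contra hne
  have hwait : b.WaitingInformative t S i τ := by
    refine ⟨hiτ ▸ harr i hia, hU ▸ hiτ ▸ hinf i hia, ?_⟩
    by_contra! hcon
    obtain ⟨hib, hle⟩ := hcon
    rcases hle.lt_or_eq with hlt | heq
    · exact hlt.ne (((h _ hlt i).2 ⟨hib, rfl⟩).2 ▸ hiτ)
    · exact hne ⟨hib, heq⟩
  obtain ⟨j, hjb, hjle, hjf⟩ := hwc' τ ⟨i, hwait⟩
  -- An update already in service before `τ` would also occupy the server of `a`, which is free.
  have hjτ : b.start j = τ := by
    refine hjle.eq_of_not_lt fun hlt => ?_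
    obtain ⟨hja, hst⟩ := (h _ hlt j).2 ⟨hjb, rfl⟩
    have hji : j ≠ i := by
      rintro rfl
      linarith
    have := hS i
    rcases hdisj j hja i hia hji with h1 | h1 <;> unfold finish at h1 hjf <;> linarith
  have hij : j ≠ i := by
    rintro rfl
    exact hne ⟨hjb, hjτ⟩
  have hwait' : a.WaitingInformative t S j τ := by
    refine ⟨hjτ ▸ harr' j hjb, hU ▸ hjτ ▸ hinf' j hjb, ?_⟩
    by_contra! hcon
    obtain ⟨hja, hle⟩ := hcon
    rcases hle.lt_or_eq with hlt | heq
    · exact hlt.ne (((h _ hlt j).1 ⟨hja, rfl⟩).2 ▸ hjτ)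
    · have := hS i
      have := hS j
      rcases hdisj j hja i hia hij with h1 | h1 <;> unfold finish at h1 <;> linarith
  exact hij (hinj ((hmin' j hjb i (hjτ ▸ hwait)).antisymm (hmin i hia j (hiτ ▸ hwait'))))

/-- Two SJF_I schedules for the same updates with distinct sizes start the same updates at the same
times. -/
theorem startsAt_iff (hS : ∀ i, 0 < S i) (hinj : Function.Injective S) {a b : Schedule n}
    (ha : a.IsSJF_I t S) (hb : b.IsSJF_I t S) (τ : ℝ) (i : Fin n) :
    a.StartsAt i τ ↔ b.StartsAt i τ := by
  let bad : Set ℝ := {τ | ¬ ∀ i, a.StartsAt i τ ↔ b.StartsAt i τ}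
  have hfin : bad.Finite := by
    refine ((finite_range a.start).union (finite_range b.start)).subset fun τ hτ => ?_
    by_contra hcon
    refine hτ fun i => ⟨fun hi => ?_, fun hi => ?_⟩
    · exact (hcon (Or.inl ⟨i, hi.2⟩)).elim
    · exact (hcon (Or.inr ⟨i, hi.2⟩)).elim
  suffices bad = ∅ by
    by_contra hcon
    have hτ : τ ∈ bad := fun hall => hcon (hall i)
    simp [this] at hτ
  by_contra hne
  obtain ⟨τ₀, hτ₀, hleast⟩ := exists_min_image bad id hfin (nonempty_iff_ne_empty.2 hne)
  have hbefore : ∀ τ' < τ₀, ∀ i, a.StartsAt i τ' ↔ b.StartsAt i τ' := by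
    intro τ' hlt
    by_contra hcon
    exact (hleast τ' hcon).not_gt hlt
  exact hτ₀ fun i => ⟨fun hi => hi.transfer hS hinj ha hb hbefore, fun hi =>
    hi.transfer hS hinj hb ha fun τ' hτ' i => (hbefore τ' hτ' i).symm⟩

/-- The two selection rules coincide: the common start time cancels. -/
theorem IsADE_I.isSJF_I {σ : Schedule n} (h : σ.IsADE_I t S) : σ.IsSJF_I t S :=
  ⟨h.1, h.2.1, h.2.2.1, fun i hi j hj => (add_le_add_iff_left _).1 (h.2.2.2 i hi j hj)⟩

end Schedule

/-- On every sample path — arrival times `t 0 < t 1 < … < t (n-1)` (all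
positive) and positive update sizes `S i`, with all scheduling choices unique (distinct
sizes) — the non-preemptive policies ADE_I and SJF_I are equivalent: they serve exactly
the same updates, each such update starts service at the same time and is delivered at
the same time under the two policies, and the two policies produce identical AoI
trajectories. -/
theorem adeI_eq_sjfI {n : ℕ} (t S : Fin n → ℝ)
    (ht : StrictMono t) (htpos : ∀ i, 0 < t i)
    (hSpos : ∀ i, 0 < S i) (hSinj : Function.Injective S)
    (σ₁ σ₂ : Schedule n)
    (h₁ : σ₁.IsADE_I t S) (h₂ : σ₂.IsSJF_I t S) :
    σ₁.served = σ₂.served ∧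
    (∀ i ∈ σ₁.served, σ₁.start i = σ₂.start i ∧ σ₁.finish S i = σ₂.finish S i) ∧
    (∀ s : ℝ, σ₁.aoi t S s = σ₂.aoi t S s) := by
  have key := Schedule.startsAt_iff hSpos hSinj h₁.isSJF_I h₂
  have hstart : ∀ i ∈ σ₁.served, σ₁.start i = σ₂.start i := fun i hi =>
    ((key _ i).1 ⟨hi, rfl⟩).2.symm
  refine ⟨?_, fun i hi => ⟨hstart i hi, ?_⟩, fun s => ?_⟩
  · ext i
    exact ⟨fun hi => ((key _ i).1 ⟨hi, rfl⟩).1, fun hi => ((key _ i).2 ⟨hi, rfl⟩).1⟩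
  · rw [Schedule.finish, Schedule.finish, hstart i hi]
  · rw [Schedule.aoi, Schedule.aoi, Schedule.U_congr hSpos fun τ _ => key τ]
end

section
/- The sequences a_n = (n² + 3n − 1)/(4n − 2) (the time-average AoI of the n-th trajectory) and p_n = 3n/(n + 1) (the average PAoI of the n-th trajectory) satisfy: a_n / n converges to 1/4 as n → ∞ (so a_n grows linearly in n and tends to infinity), while p_n converges to 3 as n → ∞. In particular, the average AoI is Θ(n) while the average PAoI is O(1) in this family. -/
/-!
Dividing numerator and denominator by the leading power of `n` and writing `u = 1 / n → 0`, one has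
`aₙ / n = (1 + 3u - u²) / (4 - 2u) → 1 / 4` and `pₙ = 3 / (1 + u) → 3`. Since `aₙ = (aₙ / n) * n` is
the product of a sequence with positive limit and one tending to infinity, it tends to infinity.
-/

open Filter Topology

/-- For the family of AoI trajectories indexed by `n`, the time-average AoI
`aₙ = (n² + 3n − 1)/(4n − 2)` and the average PAoI `pₙ = 3n/(n + 1)` satisfy:
`aₙ/n → 1/4` as `n → ∞` (so `aₙ` grows linearly in `n` and tends to infinity), while
`pₙ → 3` as `n → ∞`.  In particular the average AoI is `Θ(n)` while the average PAoI is
`O(1)` in this family. -/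
theorem aoi_linear_paoi_bounded :
    Tendsto (fun n : ℕ => (((n : ℝ) ^ 2 + 3 * (n : ℝ) - 1) / (4 * (n : ℝ) - 2)) / (n : ℝ))
      atTop (𝓝 (1 / 4)) ∧
    Tendsto (fun n : ℕ => ((n : ℝ) ^ 2 + 3 * (n : ℝ) - 1) / (4 * (n : ℝ) - 2))
      atTop atTop ∧
    Tendsto (fun n : ℕ => 3 * (n : ℝ) / ((n : ℝ) + 1)) atTop (𝓝 3) := by
  have hu : Tendsto (fun n : ℕ => (n : ℝ)⁻¹) atTop (𝓝 0) := tendsto_inv_atTop_nhds_zero_nat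
  have h1 : Tendsto (fun n : ℕ => (((n : ℝ) ^ 2 + 3 * (n : ℝ) - 1) / (4 * (n : ℝ) - 2)) / (n : ℝ))
      atTop (𝓝 (1 / 4)) := by
    have h : Tendsto (fun n : ℕ => (1 + 3 * (n : ℝ)⁻¹ - (n : ℝ)⁻¹ ^ 2) / (4 - 2 * (n : ℝ)⁻¹))
        atTop (𝓝 ((1 + 3 * 0 - 0 ^ 2) / (4 - 2 * 0))) :=
      (((hu.const_mul 3).const_add 1).sub (hu.pow 2)).div ((hu.const_mul 2).const_sub 4)
        (by norm_num)
    norm_num only at h ⊢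
    refine h.congr' ?_
    filter_upwards [eventually_ge_atTop 1] with n hn
    have hn' : (1 : ℝ) ≤ n := by exact_mod_cast hn
    have h0 : (n : ℝ) ≠ 0 := by positivity
    have hd : 4 * (n : ℝ) - 2 ≠ 0 := by linarith
    have hd' : 4 - 2 * (n : ℝ)⁻¹ ≠ 0 := by
      have := inv_le_one_of_one_le₀ hn'
      linarith
    rw [div_div, div_eq_div_iff hd' (mul_ne_zero hd h0)]
    field_simp
  refine ⟨h1, ?_, ?_⟩
  · refine (h1.pos_mul_atTop (by norm_num) tendsto_natCast_atTop_atTop).congr' ?_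
    filter_upwards [eventually_ne_atTop 0] with n hn
    exact div_mul_cancel₀ _ (Nat.cast_ne_zero.mpr hn)
  · have h : Tendsto (fun n : ℕ => 3 / (1 + (n : ℝ)⁻¹)) atTop (𝓝 (3 / (1 + 0))) :=
      tendsto_const_nhds.div (hu.const_add 1) (by norm_num)
    rw [add_zero, div_one] at h
    refine h.congr' ?_
    filter_upwards [eventually_ne_atTop 0] with n hn
    have h0 : (n : ℝ) ≠ 0 := Nat.cast_ne_zero.mpr hn
    field_simp
end
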